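/- Assume π(a|s) > 0 for all (s,a). Then η(π̃) − η(π) = E_{τ∼π} ∑_{t≥0} γ^t ρ_{0:t}(τ) · A^π(s_t, a_t), where ρ_{0:t}(τ) = ∏_{i=0}^{t} π̃(a_i|s_i)/π(a_i|s_i). -/

import Mathlib

open scoped BigOperators

namespace PolicyOpt

/-- A finite Markov decision process. -/
structure MDP (S A : Type*) [Fintype S] [Fintype A] where
  p : S → A → S → ℝ
  r : S → A → ℝ
  γ : ℝ
  μ0 : S → ℝ
  p_nonneg : ∀ s a s', 0 ≤ p s a s'
  p_sum_one : ∀ s a, ∑ s', p s a s' = 1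
  μ0_nonneg : ∀ s, 0 ≤ μ0 s
  μ0_sum_one : ∑ s, μ0 s = 1
  γ_pos : 0 < γ
  γ_lt_one : γ < 1

variable {S A : Type*} [Fintype S] [Fintype A] [DecidableEq S] [DecidableEq A]

/-- A policy assigns to every state a probability distribution over actions. -/
def IsPolicy (π : S → A → ℝ) : Prop :=
  (∀ s a, 0 ≤ π s a) ∧ ∀ s, ∑ a, π s a = 1

/-- Trajectory prefixes (histories) consisting of `t+1` state-action pairs. -/
abbrev Hist (S A : Type*) (t : ℕ) := Fin (t + 1) → S × A

/-- Probability of a history of length `t+1` when following policy `π`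
starting from the initial distribution `μ0`. -/
noncomputable def prob (M : MDP S A) (π : S → A → ℝ) (t : ℕ) (h : Hist S A t) : ℝ :=
  (M.μ0 (h 0).1 * π (h 0).1 (h 0).2) *
    ∏ i : Fin t,
      (M.p (h i.castSucc).1 (h i.castSucc).2 (h i.succ).1 * π (h i.succ).1 (h i.succ).2)

/-- Probability of a history of length `t+1` when following policy `π`,
conditioned on starting in state `s` with first action `a`. -/
noncomputable def probFrom (M : MDP S A) (π : S → A → ℝ) (s : S) (a : A) (t : ℕ) (h : Hist S A t) : ℝ :=
  (if h 0 = (s, a) then (1 : ℝ) else 0) *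
    ∏ i : Fin t,
      (M.p (h i.castSucc).1 (h i.castSucc).2 (h i.succ).1 * π (h i.succ).1 (h i.succ).2)

/-- The last state-action pair of a history. -/
def lastSA {t : ℕ} (h : Hist S A t) : S × A := h (Fin.last t)

/-- State-action value `Q^π(s,a) = E_{τ∼π}[∑_{t≥0} γ^t r(s_t,a_t) | s₀=s, a₀=a]`. -/
noncomputable def Qval (M : MDP S A) (π : S → A → ℝ) (s : S) (a : A) : ℝ :=
  ∑' t : ℕ, M.γ ^ t * ∑ h : Hist S A t, probFrom M π s a t h * M.r (lastSA h).1 (lastSA h).2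

/-- State value `V^π(s)`. -/
noncomputable def Vval (M : MDP S A) (π : S → A → ℝ) (s : S) : ℝ :=
  ∑ a, π s a * Qval M π s a

/-- Advantage `A^π(s,a) = Q^π(s,a) - V^π(s)`. -/
noncomputable def Adv (M : MDP S A) (π : S → A → ℝ) (s : S) (a : A) : ℝ :=
  Qval M π s a - Vval M π s

/-- The value `η(π) = E_{τ∼π} ∑_{t≥0} γ^t r(s_t,a_t)`. -/
noncomputable def ηval (M : MDP S A) (π : S → A → ℝ) : ℝ :=
  ∑' t : ℕ, M.γ ^ t * ∑ h : Hist S A t, prob M π t h * M.r (lastSA h).1 (lastSA h).2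

/-- Normalised discounted state occupancy measure
`d^π(s) = (1-γ) ∑_{t≥0} γ^t Pr_{τ∼π}(s_t = s)`. -/
noncomputable def dOcc (M : MDP S A) (π : S → A → ℝ) (s : S) : ℝ :=
  (1 - M.γ) * ∑' t : ℕ, M.γ ^ t *
    ∑ h : Hist S A t, prob M π t h * (if (lastSA h).1 = s then (1 : ℝ) else 0)

/-- The surrogate objective `L_π(π') = (1/(1-γ)) ∑_s d^π(s) ∑_a π'(a|s) A^π(s,a)`. -/
noncomputable def Lsur (M : MDP S A) (π π' : S → A → ℝ) : ℝ :=
  (1 - M.γ)⁻¹ * ∑ s, dOcc M π s * ∑ a, π' s a * Adv M π s a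

/-- Product of importance sampling ratios `ρ_{0:t}` along a history. -/
noncomputable def ρprod (π π' : S → A → ℝ) {t : ℕ} (h : Hist S A t) : ℝ :=
  ∏ i, π' (h i).1 (h i).2 / π (h i).1 (h i).2

/-- Smoothed product of importance sampling ratios `ρ^{α}_{0:t}`. -/
noncomputable def ρpow (π π' : S → A → ℝ) {t : ℕ} (α : Fin (t + 1) → ℝ) (h : Hist S A t) : ℝ :=
  ∏ i, (π' (h i).1 (h i).2 / π (h i).1 (h i).2) ^ (α i)

/-- The prefix of length `t+1` of a history of length `T+1` (for `t ≤ T`). -/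
def pref {T : ℕ} (h : Hist S A T) (t : Fin (T + 1)) : Hist S A (t : ℕ) :=
  fun i => h (Fin.castLE t.isLt i)

/-!
Write `P_π` for the transition matrix of the state-action chain under `π`. Discounted expectations
along trajectories are Neumann series, so `Q^π = (1 - γ P_π)⁻¹ r`. A function `g` of the state alone
has the same expectation under every policy once the law of the state is fixed; hence the Bellman
equation for `Q^π` can be written with the transition matrix of the *other* policy,
`A^π = r - (1 - γ P_π̃) V^π`. Applying `(1 - γ P_π̃)⁻¹` leaves `Q^π̃ - V^π`, and averaging over the
initial distribution gives `η(π̃) - η(π)` as the discounted advantage of `π` along trajectories of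
`π̃`. The importance ratios convert the law of histories under `π` into that under `π̃`.
-/

open Matrix
open scoped Matrix.Norms.Operator

section PathSums

variable {X R : Type*} [Fintype X] [DecidableEq X]

theorem dotProduct_pow_mulVec_eq_sum_paths [CommSemiring R] (K : Matrix X X R) (w f : X → R)
    (t : ℕ) :
    w ⬝ᵥ K ^ t *ᵥ f =
      ∑ h : Fin (t + 1) → X,
        w (h 0) * (∏ i : Fin t, K (h i.castSucc) (h i.succ)) * f (h (Fin.last t)) := by
  induction t generalizing w with
  | zero =>
    rw [← (Equiv.funUnique (Fin 1) X).symm.sum_comp]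
    simp [dotProduct]
  | succ t ih =>
    rw [pow_succ', ← mulVec_mulVec, dotProduct_mulVec, ih,
      ← (Fin.consEquiv fun _ : Fin (t + 2) => X).sum_comp, Fintype.sum_prod_type_right]
    refine Finset.sum_congr rfl fun h _ => ?_
    simp only [vecMul, dotProduct, Finset.sum_mul, Fin.consEquiv_apply, Fin.prod_univ_succ,
      Fin.castSucc_zero, ← Fin.succ_castSucc, ← Fin.succ_last, Fin.cons_zero, Fin.cons_succ,
      mul_assoc]

theorem hasSum_dotProduct_pow_mulVec [NormedCommRing R] [CompleteSpace R] {K : Matrix X X R}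
    (hK : ‖K‖ < 1) (w f : X → R) :
    HasSum (fun t : ℕ => w ⬝ᵥ K ^ t *ᵥ f) (w ⬝ᵥ (1 - K)⁻¹ *ᵥ f) := by
  -- Instance search does not see that the entrywise and the operator-norm uniformities agree.
  have : HasSummableGeomSeries (Matrix X X R) :=
    @instHasSummableGeomSeriesOfCompleteSpace _ _ (Matrix.instCompleteSpace X X R)
  rw [nonsing_inv_eq_ringInverse]
  exact (hasSum_geom_series_inverse K hK).map
    (AddMonoidHom.mk' (fun B => w ⬝ᵥ B *ᵥ f) fun B C => by rw [add_mulVec, dotProduct_add])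
    (show Continuous fun B : Matrix X X R => w ⬝ᵥ B *ᵥ f by fun_prop)

theorem norm_le_one_of_mem_rowStochastic {K : Matrix X X ℝ} (hK : K ∈ rowStochastic ℝ X) :
    ‖K‖ ≤ 1 := by
  rw [linfty_opNorm_def, NNReal.coe_le_one]
  refine Finset.sup_le fun x _ => ?_
  rw [← NNReal.coe_le_one, NNReal.coe_sum]
  simp only [coe_nnnorm, Real.norm_of_nonneg (nonneg_of_mem_rowStochastic hK),
    sum_row_of_mem_rowStochastic hK, le_refl]

end PathSums

section Policy

variable {π π' : S → A → ℝ}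

/-- The law of a state-action pair whose state has law `ν` and whose action is drawn from `π`. It
describes both the first pair of a trajectory and, with `ν = p(·|s,a)`, the successor of `(s,a)`. -/
def stateActionLaw (ν : S → ℝ) (π : S → A → ℝ) : S × A → ℝ :=
  fun x => ν x.1 * π x.1 x.2

omit [DecidableEq S] [DecidableEq A] in
theorem stateActionLaw_dotProduct (ν : S → ℝ) (π : S → A → ℝ) (q : S × A → ℝ) :
    stateActionLaw ν π ⬝ᵥ q = ν ⬝ᵥ fun s => ∑ a, π s a * q (s, a) := by
  simp only [dotProduct, stateActionLaw, Fintype.sum_prod_type, Finset.mul_sum, mul_assoc]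

omit [DecidableEq S] [DecidableEq A] in
theorem IsPolicy.stateActionLaw_dotProduct_comp_fst (hπ : IsPolicy π)
    (ν g : S → ℝ) : stateActionLaw ν π ⬝ᵥ (g ∘ Prod.fst) = ν ⬝ᵥ g := by
  simp only [stateActionLaw_dotProduct, Function.comp_apply, ← Finset.sum_mul, hπ.2, one_mul]

/-- The transition matrix `P_π` of the Markov chain of state-action pairs under the policy `π`. -/
def transitionMatrix (M : MDP S A) (π : S → A → ℝ) : Matrix (S × A) (S × A) ℝ :=
  of fun x => stateActionLaw (M.p x.1 x.2) π

omit [DecidableEq S] [DecidableEq A] in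
theorem IsPolicy.transitionMatrix_mulVec_comp_fst (hπ : IsPolicy π)
    (M : MDP S A) (g : S → ℝ) (x : S × A) :
    (transitionMatrix M π *ᵥ (g ∘ Prod.fst)) x = M.p x.1 x.2 ⬝ᵥ g :=
  hπ.stateActionLaw_dotProduct_comp_fst _ g

theorem IsPolicy.transitionMatrix_mem_rowStochastic (hπ : IsPolicy π)
    (M : MDP S A) : transitionMatrix M π ∈ rowStochastic ℝ (S × A) := by
  refine ⟨fun x y => mul_nonneg (M.p_nonneg _ _ _) (hπ.1 _ _), funext fun x => ?_⟩
  calc (transitionMatrix M π *ᵥ 1) x = M.p x.1 x.2 ⬝ᵥ 1 :=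
        hπ.transitionMatrix_mulVec_comp_fst M 1 x
    _ = 1 := by rw [dotProduct_one, M.p_sum_one]

theorem IsPolicy.norm_discount_smul_transitionMatrix_lt_one (hπ : IsPolicy π)
    (M : MDP S A) : ‖M.γ • transitionMatrix M π‖ < 1 :=
  calc ‖M.γ • transitionMatrix M π‖ = M.γ * ‖transitionMatrix M π‖ := by
        rw [norm_smul, Real.norm_of_nonneg M.γ_pos.le]
    _ ≤ M.γ := mul_le_of_le_one_right M.γ_pos.le
        (norm_le_one_of_mem_rowStochastic (hπ.transitionMatrix_mem_rowStochastic M))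
    _ < 1 := M.γ_lt_one

/-- The resolvent `(1 - γ P_π)⁻¹ = ∑_t γ^t P_π^t`, which sends a function of state-action pairs to
its expected discounted sum along trajectories as a function of the first pair. -/
noncomputable def discountedResolvent (M : MDP S A) (π : S → A → ℝ) : Matrix (S × A) (S × A) ℝ :=
  (1 - M.γ • transitionMatrix M π)⁻¹

theorem IsPolicy.isUnit_det_one_sub_discount_smul_transitionMatrix
    (hπ : IsPolicy π) (M : MDP S A) : IsUnit (1 - M.γ • transitionMatrix M π).det :=
  (isUnit_iff_isUnit_det _).1
    (isUnit_one_sub_of_norm_lt_one (hπ.norm_discount_smul_transitionMatrix_lt_one M))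

theorem IsPolicy.discountedResolvent_mulVec_eq_add (hπ : IsPolicy π) (M : MDP S A) (f : S × A → ℝ) :
    discountedResolvent M π *ᵥ f =
      f + M.γ • (transitionMatrix M π *ᵥ (discountedResolvent M π *ᵥ f)) := by
  have h : (1 - M.γ • transitionMatrix M π) *ᵥ (discountedResolvent M π *ᵥ f) = f := by
    rw [mulVec_mulVec, discountedResolvent,
      mul_nonsing_inv _ (hπ.isUnit_det_one_sub_discount_smul_transitionMatrix M), one_mulVec]
  rwa [sub_mulVec, one_mulVec, smul_mulVec, sub_eq_iff_eq_add] at h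

theorem IsPolicy.discountedResolvent_mulVec_one_sub_mulVec (hπ : IsPolicy π) (M : MDP S A)
    (f : S × A → ℝ) :
    discountedResolvent M π *ᵥ ((1 - M.γ • transitionMatrix M π) *ᵥ f) = f := by
  rw [mulVec_mulVec, discountedResolvent,
    nonsing_inv_mul _ (hπ.isUnit_det_one_sub_discount_smul_transitionMatrix M), one_mulVec]

theorem IsPolicy.hasSum_discounted_sum_hist (hπ : IsPolicy π) (M : MDP S A) (w f : S × A → ℝ) :
    HasSum (fun t : ℕ => M.γ ^ t * ∑ h : Hist S A t,
        w (h 0) * (∏ i : Fin t, transitionMatrix M π (h i.castSucc) (h i.succ)) * f (lastSA h))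
      (w ⬝ᵥ discountedResolvent M π *ᵥ f) := by
  have h := hasSum_dotProduct_pow_mulVec (hπ.norm_discount_smul_transitionMatrix_lt_one M) w f
  simp only [smul_pow, smul_mulVec, dotProduct_smul, smul_eq_mul,
    dotProduct_pow_mulVec_eq_sum_paths] at h
  exact h

theorem IsPolicy.hasSum_discounted_sum_prob (hπ : IsPolicy π) (M : MDP S A) (f : S × A → ℝ) :
    HasSum (fun t : ℕ => M.γ ^ t * ∑ h : Hist S A t, prob M π t h * f (lastSA h))
      (stateActionLaw M.μ0 π ⬝ᵥ discountedResolvent M π *ᵥ f) :=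
  hπ.hasSum_discounted_sum_hist M (stateActionLaw M.μ0 π) f

theorem stateActionLaw_dotProduct_Qval (M : MDP S A) (ν : S → ℝ) (π : S → A → ℝ) :
    stateActionLaw ν π ⬝ᵥ Function.uncurry (Qval M π) = ν ⬝ᵥ Vval M π :=
  stateActionLaw_dotProduct ν π _

theorem IsPolicy.discountedResolvent_mulVec_reward (hπ : IsPolicy π) (M : MDP S A) :
    discountedResolvent M π *ᵥ Function.uncurry M.r = Function.uncurry (Qval M π) := by
  ext ⟨s, a⟩
  have h := hπ.hasSum_discounted_sum_hist M (fun x => if x = (s, a) then 1 else 0)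
    (Function.uncurry M.r)
  simp only [dotProduct, ite_mul, one_mul, zero_mul, Finset.sum_ite_eq', Finset.mem_univ,
    if_true] at h
  simp only [Function.uncurry_apply_pair, Qval, probFrom, ite_mul, one_mul, zero_mul]
  exact h.tsum_eq.symm

theorem IsPolicy.ηval_eq_dotProduct_Vval (hπ : IsPolicy π) (M : MDP S A) :
    ηval M π = M.μ0 ⬝ᵥ Vval M π := by
  rw [← stateActionLaw_dotProduct_Qval, ← hπ.discountedResolvent_mulVec_reward]
  exact (hπ.hasSum_discounted_sum_prob M (Function.uncurry M.r)).tsum_eq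

theorem IsPolicy.Qval_bellman (hπ : IsPolicy π) (M : MDP S A) (s : S) (a : A) :
    Qval M π s a = M.r s a + M.γ * (M.p s a ⬝ᵥ Vval M π) := by
  have h := congrFun (hπ.discountedResolvent_mulVec_eq_add M (Function.uncurry M.r)) (s, a)
  rw [hπ.discountedResolvent_mulVec_reward] at h
  rw [← stateActionLaw_dotProduct_Qval]
  exact h

theorem IsPolicy.Adv_eq_reward_sub_mulVec (hπ : IsPolicy π) (hπ' : IsPolicy π') (M : MDP S A) :
    Function.uncurry (Adv M π) = Function.uncurry M.r -
      (1 - M.γ • transitionMatrix M π') *ᵥ (Vval M π ∘ Prod.fst) := by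
  ext ⟨s, a⟩
  rw [sub_mulVec, one_mulVec, smul_mulVec, Pi.sub_apply, Pi.sub_apply, Pi.smul_apply,
    hπ'.transitionMatrix_mulVec_comp_fst]
  simp only [Function.uncurry_apply_pair, Function.comp_apply, smul_eq_mul, Adv,
    hπ.Qval_bellman M s a]
  ring

theorem IsPolicy.discountedResolvent_mulVec_Adv (hπ : IsPolicy π) (hπ' : IsPolicy π')
    (M : MDP S A) :
    discountedResolvent M π' *ᵥ Function.uncurry (Adv M π) =
      Function.uncurry (Qval M π') - Vval M π ∘ Prod.fst := by
  rw [hπ.Adv_eq_reward_sub_mulVec hπ', mulVec_sub, hπ'.discountedResolvent_mulVec_one_sub_mulVec,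
    hπ'.discountedResolvent_mulVec_reward]

theorem IsPolicy.hasSum_performance_difference (hπ : IsPolicy π) (hπ' : IsPolicy π') (M : MDP S A) :
    HasSum (fun t : ℕ => M.γ ^ t * ∑ h : Hist S A t,
        prob M π' t h * Adv M π (lastSA h).1 (lastSA h).2)
      (ηval M π' - ηval M π) := by
  have expected_Adv : stateActionLaw M.μ0 π' ⬝ᵥ
      discountedResolvent M π' *ᵥ Function.uncurry (Adv M π) = ηval M π' - ηval M π :=
    calc _ = stateActionLaw M.μ0 π' ⬝ᵥ (Function.uncurry (Qval M π') - Vval M π ∘ Prod.fst) := by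
          rw [hπ.discountedResolvent_mulVec_Adv hπ']
      _ = M.μ0 ⬝ᵥ Vval M π' - M.μ0 ⬝ᵥ Vval M π := by
          rw [dotProduct_sub, stateActionLaw_dotProduct_Qval,
            hπ'.stateActionLaw_dotProduct_comp_fst]
      _ = ηval M π' - ηval M π := by
          rw [hπ.ηval_eq_dotProduct_Vval, hπ'.ηval_eq_dotProduct_Vval]
  rw [← expected_Adv]
  exact hπ'.hasSum_discounted_sum_prob M (Function.uncurry (Adv M π))

omit [DecidableEq S] [DecidableEq A] in
theorem prob_mul_ρprod (M : MDP S A) (hac : ∀ s a, π s a = 0 → π' s a = 0)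
    {t : ℕ} (h : Hist S A t) : prob M π t h * ρprod π π' h = prob M π' t h := by
  -- Where `π s a = 0` the ratio is the junk value `x / 0 = 0`, and the step has probability `0`
  -- under both policies.
  have mul_ratio : ∀ s a, π s a * (π' s a / π s a) = π' s a := fun s a =>
    mul_div_cancel_of_imp' (hac s a)
  unfold prob ρprod
  rw [Fin.prod_univ_succ, mul_mul_mul_comm, ← Finset.prod_mul_distrib]
  simp only [mul_assoc, mul_ratio]

end Policy

theorem value_difference_importance_sampling_general
    (M : MDP S A) (π π' : S → A → ℝ) (hπ : IsPolicy π) (hπ' : IsPolicy π')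
    (hac : ∀ s a, π s a = 0 → π' s a = 0) :
    HasSum (fun t : ℕ => M.γ ^ t * ∑ h : Hist S A t,
        prob M π t h * (ρprod π π' h * Adv M π (lastSA h).1 (lastSA h).2))
      (ηval M π' - ηval M π) := by
  simp only [← mul_assoc (prob M π _ _), prob_mul_ρprod M hac]
  exact hπ.hasSum_performance_difference hπ' M

/-- The importance-sampled form of the policy value difference:
`η(π̃) − η(π) = E_{τ∼π} ∑_{t≥0} γ^t ρ_{0:t}(τ) A^π(s_t,a_t)`. -/
theorem value_difference_importance_sampling
    (M : MDP S A) (π π' : S → A → ℝ)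
    (hπ : IsPolicy π) (hπ' : IsPolicy π')
    (hπpos : ∀ s a, 0 < π s a) :
    ηval M π' - ηval M π =
      ∑' t : ℕ, M.γ ^ t *
        ∑ h : Hist S A t, prob M π t h * (ρprod π π' h * Adv M π (lastSA h).1 (lastSA h).2) :=
  (value_difference_importance_sampling_general M π π' hπ hπ' fun s a h =>
    absurd h (hπpos s a).ne').tsum_eq.symm

end PolicyOpt
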